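/- Let c*(t,w) satisfy c*(t,0) = 0 with c*(t,·) locally Lipschitz and strictly increasing in w, let w(t,x) solve ∂_t w(t,x) = −c*(t,w(t,x)), w(0,x) = x, assume x ↦ c*(t,w(t,x)) is twice differentiable with strictly positive first derivative, let D : (0,∞) → (0,∞) be differentiable with ∫_x^∞ D(ξ) dξ < ∞ for all x > 0, and let u satisfy ∂_c u(t, c*(t,w(t,x))) = ∫_x^∞ D(ξ) dξ. Then the investor is CARA, i.e. ∂_c ρ(t,c) = 0 for all t ≥ 0 and all c in the range of c*(t,w(t,·)), if and only if for every x > 0 and every t ≥ 0: D'(x)/D(x) + D(x)/∫_x^∞ D(ξ) dξ = (∂²_x c*(t,w(t,x))) / (∂_x c*(t,w(t,x))); in particular the right-hand side is then independent of t. -/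

import Mathlib

/-!
Write `G t x = cstar t (w t x)` and `P x = ∫ ξ in Ioi x, D ξ`. Differentiating
`du t (G t x) = P x` in `x` gives `d2u t (G t x) * dc t x = -D x`, so the absolute risk aversion
along the consumption path is `D x / (dc t x * P x)`. Differentiating once more in `x`,
`drho t (G t x) * dc t x` is `D x / (dc t x * P x)` times
`D' x / D x + D x / P x - d2c t x / dc t x`. Both `dc t x` and `D x / (dc t x * P x)` are positive,
which gives the equivalence; the left-hand side of the resulting identity does not involve `t`.

The chain rule needs `G t x > 0`, since `u` is only differentiated at positive consumption. This
amounts to `w t x > 0` (`wealth_pos`), which does not follow from ODE uniqueness: the local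
Lipschitz constant of `cstar t` is not assumed to be locally bounded in `t`. Instead, strict
monotonicity of `G t` is used. If `w · x₀` first vanishes at time `t₁`, then a path starting at
`x < x₀` cannot become negative before `t₁`, because whenever it is negative some path between
the two is zero (`exists_zero_between`), so `G t x < 0` and the path starting at `x` is increasing.
Hence `w t₁ x ≥ 0` and `G t₁ x ≥ 0 = G t₁ x₀`, contradicting strict monotonicity.
-/

open MeasureTheory Set

/-- Intermediate value property for a function without upward jumps. -/
lemma exists_zero_between {f : ℝ → ℝ} {a b : ℝ} (hab : a ≤ b)
    (hf : ∀ x ∈ Icc a b, ∀ y ∈ Icc a b, x ≤ y → f y ≤ f x + (y - x))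
    (ha : f a ≤ 0) (hb : 0 ≤ f b) : ∃ s ∈ Icc a b, f s = 0 := by
  set S : Set ℝ := {y | y ∈ Icc a b ∧ f y ≤ 0}
  have haS : a ∈ S := ⟨⟨le_rfl, hab⟩, ha⟩
  have hbdd : BddAbove S := ⟨b, fun y hy => hy.1.2⟩
  have hs : sSup S ∈ Icc a b :=
    ⟨le_csSup hbdd haS, csSup_le ⟨a, haS⟩ fun y hy => hy.1.2⟩
  refine ⟨sSup S, hs, le_antisymm ?_ ?_⟩
  · by_contra! h
    obtain ⟨y, hy, hlt⟩ := exists_lt_of_lt_csSup ⟨a, haS⟩ (sub_lt_self (sSup S) h)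
    have := hf y hy.1 _ hs (le_csSup hbdd hy)
    linarith [hy.2]
  · by_contra! h
    -- Moving right from the supremum by at most `-f` keeps `f` nonpositive, up to the endpoint `b`.
    set y := min b (sSup S - f (sSup S))
    have hy1 : sSup S ≤ y := le_min hs.2 (by linarith)
    have hy : y ∈ Icc a b := ⟨hs.1.trans hy1, min_le_left _ _⟩
    have hfy := hf _ hs y hy hy1
    have hy2 : y ≤ sSup S - f (sSup S) := min_le_right _ _
    have hyS : y ∈ S := ⟨hy, by linarith⟩
    have hle : y ≤ sSup S := le_csSup hbdd hyS
    rcases min_choice b (sSup S - f (sSup S)) with h' | h'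
    · have : sSup S = b := le_antisymm hs.2 (by rw [← h']; exact hle)
      rw [this] at h
      linarith
    · have : y = sSup S - f (sSup S) := h'
      linarith

/-- Positive initial wealth stays positive. -/
lemma wealth_pos (cstar w : ℝ → ℝ → ℝ)
    (hc0 : ∀ t ≥ (0:ℝ), cstar t 0 = 0)
    (hcmono : ∀ t ≥ (0:ℝ), StrictMonoOn (cstar t) (Ici 0))
    (hw0 : ∀ x ≥ (0:ℝ), w 0 x = x)
    (hwode : ∀ x ≥ (0:ℝ), ∀ t ≥ (0:ℝ),
      HasDerivAt (fun s => w s x) (-(cstar t (w t x))) t)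
    (hG : ∀ t ≥ (0:ℝ), StrictMonoOn (fun x => cstar t (w t x)) (Ioi 0)) :
    ∀ t ≥ (0:ℝ), ∀ x > (0:ℝ), 0 < w t x := by
  intro T hT x₀ hx₀
  have hcont : ∀ x ≥ (0:ℝ), ∀ b, ContinuousOn (fun s => w s x) (Icc 0 b) := fun x hx b s hs =>
    (hwode x hx s hs.1).continuousAt.continuousWithinAt
  by_contra! hneg
  -- The gap between two wealth paths shrinks, so `w t` has no upward jumps.
  have hgap : ∀ t ≥ (0:ℝ), ∀ x > (0:ℝ), ∀ y, x ≤ y → w t y ≤ w t x + (y - x) := by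
    intro t ht x hx y hxy
    have hanti : AntitoneOn (fun s => w s y - w s x) (Icc 0 t) := by
      refine antitoneOn_of_hasDerivWithinAt_nonpos (convex_Icc 0 t)
        ((hcont y (hx.le.trans hxy) t).sub (hcont x hx.le t))
        (f' := fun s => -(cstar s (w s y)) - -(cstar s (w s x))) ?_ ?_
      · intro s hs
        have hs := interior_subset hs
        exact ((hwode y (hx.le.trans hxy) s hs.1).sub (hwode x hx.le s hs.1)).hasDerivWithinAt
      · intro s hs
        have hs := interior_subset hs
        have := (hG s hs.1).monotoneOn (mem_Ioi.2 hx) (mem_Ioi.2 (lt_of_lt_of_le hx hxy)) hxy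
        linarith
    have := hanti (left_mem_Icc.2 ht) (right_mem_Icc.2 ht) ht
    simp only [hw0 x hx.le, hw0 y (hx.le.trans hxy)] at this
    linarith
  have hzero : ∀ t ≥ (0:ℝ), w t x₀ ≤ 0 → ∃ s ∈ Icc 0 t, w s x₀ = 0 := by
    intro t ht h
    exact intermediate_value_Icc' ht (hcont x₀ hx₀.le t) ⟨h, by simp [hw0 x₀ hx₀.le, hx₀.le]⟩
  have hcomp : IsCompact (Icc 0 T ∩ (fun s => w s x₀) ⁻¹' {0}) :=
    isCompact_Icc.of_isClosed_subset
      ((hcont x₀ hx₀.le T).preimage_isClosed_of_isClosed isClosed_Icc isClosed_singleton)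
      inter_subset_left
  obtain ⟨t₁, ⟨⟨ht₁0, ht₁T⟩, ht₁⟩, hmin⟩ := hcomp.exists_isLeast (by
    obtain ⟨s, hs, h⟩ := hzero T hT hneg
    exact ⟨s, hs, h⟩)
  replace ht₁ : w t₁ x₀ = 0 := ht₁
  have hbefore : ∀ t ∈ Ico 0 t₁, 0 < w t x₀ := by
    intro t ht
    by_contra! h
    obtain ⟨s, hs, hs0⟩ := hzero t ht.1 h
    have := hmin ⟨⟨hs.1, by linarith [hs.2, ht.2]⟩, hs0⟩
    linarith [hs.2, ht.2]
  have hx : 0 < x₀ / 2 := by linarith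
  have hlt : x₀ / 2 < x₀ := by linarith
  have hnonneg : 0 ≤ w t₁ (x₀ / 2) := by
    refine le_of_forall_pos_le_add fun ε hε => ?_
    have := image_le_of_deriv_right_lt_deriv_boundary (f := fun s => -w s (x₀ / 2))
      (f' := fun s => cstar s (w s (x₀ / 2))) (a := 0) (b := t₁) (B := fun _ => ε)
      (B' := fun _ => 0) (hcont _ hx.le t₁).neg ?_ ?_ (fun s => hasDerivAt_const s ε) ?_
      (right_mem_Icc.2 ht₁0)
    · linarith
    · intro s hs
      have h := (hwode _ hx.le s hs.1).neg.hasDerivWithinAt (s := Ici s)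
      rw [neg_neg] at h
      exact h
    · simp only [hw0 _ hx.le]
      linarith
    · intro s hs heq
      obtain ⟨y, hy, hy0⟩ := exists_zero_between (f := w s) hlt.le
        (fun a ha b _ hab => hgap s hs.1 a (hx.trans_le ha.1) b hab)
        (by linarith) (hbefore s hs).le
      have hne : x₀ / 2 ≠ y := by
        rintro rfl
        linarith
      have := hG s hs.1 (mem_Ioi.2 hx) (mem_Ioi.2 (hx.trans_le hy.1)) (lt_of_le_of_ne hy.1 hne)
      simpa only [hy0, hc0 s hs.1] using this
  have h1 := hG t₁ ht₁0 (mem_Ioi.2 hx) (mem_Ioi.2 hx₀) hlt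
  have h2 := (hcmono t₁ ht₁0).monotoneOn self_mem_Ici hnonneg hnonneg
  simp only [ht₁, hc0 t₁ ht₁0] at h1 h2
  linarith

lemma hasDerivAt_tail {D : ℝ → ℝ} (hDc : ∀ x > (0:ℝ), ContinuousAt D x)
    (hDint : ∀ x > (0:ℝ), IntegrableOn D (Ioi x)) {x : ℝ} (hx : 0 < x) :
    HasDerivAt (fun z => ∫ ξ in Ioi z, D ξ) (-D x) x := by
  have hcon : ContinuousOn D (Ioi 0) := fun z hz => (hDc z hz).continuousWithinAt
  have hd : HasDerivAt (fun z => ∫ ξ in (x / 2)..z, D ξ) (D x) x := by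
    refine intervalIntegral.integral_hasDerivAt_right ?_
      (hcon.stronglyMeasurableAtFilter isOpen_Ioi x hx) (hDc x hx)
    exact (intervalIntegrable_iff_integrableOn_Ioc_of_le (by linarith)).2
      ((hDint (x / 2) (by linarith)).mono_set Ioc_subset_Ioi_self)
  refine (hd.const_sub (∫ ξ in Ioi (x / 2), D ξ)).congr_of_eventuallyEq ?_
  filter_upwards [Ioi_mem_nhds hx] with z hz
  rw [← intervalIntegral.integral_Ioi_sub_Ioi' (hDint (x / 2) (by linarith)) (hDint z hz)]
  ring

lemma tail_pos {D : ℝ → ℝ} (hD : ∀ x > (0:ℝ), 0 < D x)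
    (hDint : ∀ x > (0:ℝ), IntegrableOn D (Ioi x)) {x : ℝ} (hx : 0 < x) :
    0 < ∫ ξ in Ioi x, D ξ := by
  have hpos : ∀ ξ ∈ Ioi x, 0 < D ξ := fun ξ hξ => hD ξ (hx.trans hξ)
  rw [setIntegral_pos_iff_support_of_nonneg_ae
    ((ae_restrict_mem measurableSet_Ioi).mono fun ξ hξ => (hpos ξ hξ).le) (hDint x hx)]
  have hsub : Ioi x ⊆ Function.support D := fun ξ hξ => (hpos ξ hξ).ne'
  rw [inter_eq_right.2 hsub]
  simp

theorem stmt_6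
    (cstar : ℝ → ℝ → ℝ) (w : ℝ → ℝ → ℝ) (dc d2c : ℝ → ℝ → ℝ)
    (D D' : ℝ → ℝ) (u du d2u drho : ℝ → ℝ → ℝ)
    (hc0 : ∀ t ≥ (0:ℝ), cstar t 0 = 0)
    (hclip : ∀ t ≥ (0:ℝ), LocallyLipschitz (cstar t))
    (hcmono : ∀ t ≥ (0:ℝ), StrictMonoOn (cstar t) (Ici 0))
    (hw0 : ∀ x ≥ (0:ℝ), w 0 x = x)
    (hwode : ∀ x ≥ (0:ℝ), ∀ t ≥ (0:ℝ),
      HasDerivAt (fun s => w s x) (-(cstar t (w t x))) t)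
    (hdc : ∀ t ≥ (0:ℝ), ∀ x > (0:ℝ), HasDerivAt (fun z => cstar t (w t z)) (dc t x) x)
    (hd2c : ∀ t ≥ (0:ℝ), ∀ x > (0:ℝ), HasDerivAt (dc t) (d2c t x) x)
    (hdcpos : ∀ t ≥ (0:ℝ), ∀ x > (0:ℝ), 0 < dc t x)
    (hD : ∀ x > (0:ℝ), 0 < D x)
    (hD' : ∀ x > (0:ℝ), HasDerivAt D (D' x) x)
    (hDint : ∀ x > (0:ℝ), IntegrableOn D (Ioi x))
    (hdu : ∀ t ≥ (0:ℝ), ∀ c > (0:ℝ), HasDerivAt (u t) (du t c) c)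
    (hd2u : ∀ t ≥ (0:ℝ), ∀ c > (0:ℝ), HasDerivAt (du t) (d2u t c) c)
    (hduid : ∀ t ≥ (0:ℝ), ∀ x > (0:ℝ),
      du t (cstar t (w t x)) = ∫ ξ in Ioi x, D ξ)
    (hdrho : ∀ t ≥ (0:ℝ), ∀ c > (0:ℝ),
      HasDerivAt (fun v => -(d2u t v) / du t v) (drho t c) c) :
    ((∀ t ≥ (0:ℝ), ∀ x > (0:ℝ), drho t (cstar t (w t x)) = 0) ↔
      (∀ x > (0:ℝ), ∀ t ≥ (0:ℝ),
        D' x / D x + D x / (∫ ξ in Ioi x, D ξ) = d2c t x / dc t x)) ∧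
    ((∀ t ≥ (0:ℝ), ∀ x > (0:ℝ), drho t (cstar t (w t x)) = 0) →
      ∀ x > (0:ℝ), ∀ t ≥ (0:ℝ), ∀ s ≥ (0:ℝ), d2c t x / dc t x = d2c s x / dc s x) := by
  have hG : ∀ t ≥ (0:ℝ), StrictMonoOn (fun x => cstar t (w t x)) (Ioi 0) := by
    intro t ht
    refine strictMonoOn_of_hasDerivWithinAt_pos (convex_Ioi 0)
      (fun x hx => (hdc t ht x hx).continuousAt.continuousWithinAt) (f' := dc t) ?_ ?_
    · intro x hx
      exact (hdc t ht x (interior_subset hx)).hasDerivWithinAt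
    · intro x hx
      exact hdcpos t ht x (interior_subset hx)
  have hGpos : ∀ t ≥ (0:ℝ), ∀ x > (0:ℝ), 0 < cstar t (w t x) := by
    intro t ht x hx
    have hwx := wealth_pos cstar w hc0 hcmono hw0 hwode hG t ht x hx
    simpa [hc0 t ht] using hcmono t ht self_mem_Ici hwx.le hwx
  have hP : ∀ x > (0:ℝ), HasDerivAt (fun z => ∫ ξ in Ioi z, D ξ) (-D x) x := fun x hx =>
    hasDerivAt_tail (fun z hz => (hD' z hz).continuousAt) hDint hx
  have hPpos : ∀ x > (0:ℝ), 0 < ∫ ξ in Ioi x, D ξ := fun x hx => tail_pos hD hDint hx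
  have h2u : ∀ t ≥ (0:ℝ), ∀ x > (0:ℝ), d2u t (cstar t (w t x)) * dc t x = -D x := by
    intro t ht x hx
    have h := (hd2u t ht _ (hGpos t ht x hx)).comp x (hdc t ht x hx)
    refine h.unique ((hP x hx).congr_of_eventuallyEq ?_)
    filter_upwards [Ioi_mem_nhds hx] with z hz
    exact hduid t ht z hz
  have hkey : ∀ t ≥ (0:ℝ), ∀ x > (0:ℝ), drho t (cstar t (w t x)) * dc t x =
      D x / (dc t x * ∫ ξ in Ioi x, D ξ) *
        (D' x / D x + D x / (∫ ξ in Ioi x, D ξ) - d2c t x / dc t x) := by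
    intro t ht x hx
    have h := (hdrho t ht _ (hGpos t ht x hx)).comp x (hdc t ht x hx)
    have hne : dc t x * (∫ ξ in Ioi x, D ξ) ≠ 0 := (mul_pos (hdcpos t ht x hx) (hPpos x hx)).ne'
    have h' := (hD' x hx).div ((hd2c t ht x hx).mul (hP x hx)) hne
    have heq := h.unique (h'.congr_of_eventuallyEq (by
      filter_upwards [Ioi_mem_nhds hx] with z hz
      have h1 := (hdcpos t ht z hz).ne'
      have h2 := (hPpos z hz).ne'
      have h3 := h2u t ht z hz
      simp only [Function.comp_apply, Pi.div_apply, Pi.mul_apply]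
      rw [hduid t ht z hz, div_eq_div_iff h2 (mul_ne_zero h1 h2)]
      linear_combination (-(∫ ξ in Ioi z, D ξ)) * h3))
    rw [heq]
    have h1 := (hdcpos t ht x hx).ne'
    have h2 := (hPpos x hx).ne'
    have h3 := (hD x hx).ne'
    simp only [Pi.mul_apply]
    field_simp
    ring
  have hiff : ∀ t ≥ (0:ℝ), ∀ x > (0:ℝ), drho t (cstar t (w t x)) = 0 ↔
      D' x / D x + D x / (∫ ξ in Ioi x, D ξ) = d2c t x / dc t x := by
    intro t ht x hx
    have h1 := (hdcpos t ht x hx).ne'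
    have h2 := (div_pos (hD x hx) (mul_pos (hdcpos t ht x hx) (hPpos x hx))).ne'
    rw [← sub_eq_zero (b := d2c t x / dc t x), ← mul_eq_zero_iff_right h1, hkey t ht x hx,
      mul_eq_zero_iff_left h2]
  refine ⟨⟨fun h x hx t ht => (hiff t ht x hx).1 (h t ht x hx),
    fun h t ht x hx => (hiff t ht x hx).2 (h x hx t ht)⟩, fun h x hx t ht s hs => ?_⟩
  rw [← (hiff t ht x hx).1 (h t ht x hx), (hiff s hs x hx).1 (h s hs x hx)]
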